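/- arXiv:1405.7891 — 3 statements merged into one kernel-verified Lean document; each statement's English description precedes it below -/
import Mathlib

section
/- Let Q(x,y) = x⁴ + y⁴ − 6x²y² and G(x,y) = Q(x,y) · log(x² + y²), defined for (x,y) ∈ ℝ² \ {(0,0)}. Then there exist functions H₁, H₂, bounded on the punctured unit ball B₁ \ {0}, such that ∂⁴G/∂x⁴(x,y) = 24 log(x² + y²) + H₁(x,y) and ∂⁴G/∂y⁴(x,y) = 24 log(x² + y²) + H₂(x,y) for all 0 < x² + y² < 1. -/
/-- Partial derivative in the first variable. -/
noncomputable def pdx (f : ℝ → ℝ → ℝ) (x y : ℝ) : ℝ := deriv (fun t => f t y) x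

/-- Partial derivative in the second variable. -/
noncomputable def pdy (f : ℝ → ℝ → ℝ) (x y : ℝ) : ℝ := deriv (fun t => f x t) y

/-- The polynomial `Q(x,y) = x⁴ + y⁴ − 6 x² y²`. -/
def Q (x y : ℝ) : ℝ := x ^ 4 + y ^ 4 - 6 * x ^ 2 * y ^ 2

/-- `G(x,y) = Q(x,y) log(x² + y²)`. -/
noncomputable def G (x y : ℝ) : ℝ := Q x y * Real.log (x ^ 2 + y ^ 2)

/-!
Let `ρ` and `A` be smooth and positively homogeneous off the origin, `A` of degree `n`, and let `B`
be of the same kind and of the same degree as `A`. A directional derivative of `log ρ • A + B`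
differentiates the coefficient `A` of the logarithm and otherwise only produces smooth homogeneous
terms, of degree one less than before. After `n` derivatives the error term is therefore homogeneous
of degree `0`, hence determined by its values on the unit sphere, and so bounded by compactness.
Here `ρ = x² + y²` and `A = Q`, whose pure fourth derivatives equal `24`.
-/

open Function Set
open scoped ContDiff

section Homogeneous

variable {E F : Type*} [NormedAddCommGroup E] [NormedSpace ℝ E]
  [NormedAddCommGroup F] [NormedSpace ℝ F] {f g A : E → F} {ρ φ : E → ℝ} {j k m : ℤ}

/-- Functions on a normed space that are smooth and positively homogeneous of degree `k` away from
the origin. The value at the origin is arbitrary, and the degree may be negative. -/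
structure IsSmoothHomogeneous (k : ℤ) (f : E → F) : Prop where
  contDiffOn : ContDiffOn ℝ ∞ f {0}ᶜ
  map_smul : ∀ c : ℝ, 0 < c → ∀ x ≠ 0, f (c • x) = c ^ k • f x

/-- The directional derivative along `v`, as an operator on functions so that it can be iterated. -/
noncomputable def dirDeriv (v : E) (f : E → F) : E → F := fun x => lineDeriv ℝ f x v

lemma dirDeriv_eqOn {s : Set E} (hs : IsOpen s) (hfg : EqOn f g s) (v : E) :
    EqOn (dirDeriv v f) (dirDeriv v g) s := fun _ hx =>
  (hfg.eventuallyEq_of_mem (hs.mem_nhds hx)).lineDeriv_eq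

lemma dirDeriv_comp_smul (c : ℝ) (v : E) (f : E → F) (x : E) :
    dirDeriv v (fun z => f (c • z)) x = c • dirDeriv v f (c • x) := by
  rw [dirDeriv, dirDeriv, ← lineDeriv_smul]
  simp only [lineDeriv, smul_add, smul_comm c]

lemma dirDeriv_const_smul (c : ℝ) (v : E) (f : E → F) (x : E) :
    dirDeriv v (fun z => c • f z) x = c • dirDeriv v f x :=
  deriv_fun_const_smul_field c _

lemma dirDeriv_log_smul_add {x : E} (hρ : DifferentiableAt ℝ ρ x) (hρx : ρ x ≠ 0)
    (hf : DifferentiableAt ℝ f x) (hg : DifferentiableAt ℝ g x) (v : E) :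
    dirDeriv v (fun z => Real.log (ρ z) • f z + g z) x =
      Real.log (ρ x) • dirDeriv v f x + (((ρ x)⁻¹ * dirDeriv v ρ x) • f x + dirDeriv v g x) := by
  have hsum := ((hρ.hasFDerivAt.log hρx).fun_smul hf.hasFDerivAt).fun_add hg.hasFDerivAt
  rw [dirDeriv, (hsum.hasLineDerivAt v).lineDeriv]
  simp [dirDeriv, hρ.lineDeriv_eq_fderiv, hf.lineDeriv_eq_fderiv, hg.lineDeriv_eq_fderiv, add_assoc]

namespace IsSmoothHomogeneous

lemma differentiableAt (hf : IsSmoothHomogeneous k f) {x : E} (hx : x ≠ 0) :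
    DifferentiableAt ℝ f x :=
  (hf.contDiffOn.contDiffAt (isOpen_compl_singleton.mem_nhds hx)).differentiableAt (by simp)

lemma add (hf : IsSmoothHomogeneous k f) (hg : IsSmoothHomogeneous k g) :
    IsSmoothHomogeneous k (fun x => f x + g x) where
  contDiffOn := hf.contDiffOn.add hg.contDiffOn
  map_smul c hc x hx := by rw [hf.map_smul c hc x hx, hg.map_smul c hc x hx, smul_add]

lemma smul (hφ : IsSmoothHomogeneous j φ) (hf : IsSmoothHomogeneous k f) :
    IsSmoothHomogeneous (j + k) (fun x => φ x • f x) where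
  contDiffOn := hφ.contDiffOn.smul hf.contDiffOn
  map_smul c hc x hx := by
    rw [hφ.map_smul c hc x hx, hf.map_smul c hc x hx, zpow_add₀ hc.ne', smul_eq_mul, smul_smul,
      smul_smul, mul_right_comm]

lemma inv (hφ : IsSmoothHomogeneous k φ) (hφ₀ : ∀ x ≠ 0, φ x ≠ 0) :
    IsSmoothHomogeneous (-k) (fun x => (φ x)⁻¹) where
  contDiffOn := hφ.contDiffOn.inv hφ₀
  map_smul c hc x hx := by
    rw [hφ.map_smul c hc x hx, smul_eq_mul, smul_eq_mul, mul_inv, zpow_neg]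

protected lemma dirDeriv (hf : IsSmoothHomogeneous k f) (v : E) :
    IsSmoothHomogeneous (k - 1) (dirDeriv v f) where
  contDiffOn := by
    have hfderiv : ContDiffOn ℝ ∞ (fderiv ℝ f) {0}ᶜ :=
      hf.contDiffOn.fderiv_of_isOpen isOpen_compl_singleton (by simp)
    exact (hfderiv.clm_apply contDiffOn_const).congr
      fun x hx => (hf.differentiableAt hx).lineDeriv_eq_fderiv
  map_smul c hc x hx := by
    have hscale : c • dirDeriv v f (c • x) = c ^ k • dirDeriv v f x := by
      rw [← dirDeriv_comp_smul, ← dirDeriv_const_smul]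
      exact dirDeriv_eqOn isOpen_compl_singleton (fun z hz => hf.map_smul c hc z hz) v hx
    rw [zpow_sub_one₀ hc.ne', mul_comm, mul_smul, ← hscale, inv_smul_smul₀ hc.ne']

lemma dirDeriv_iterate (hf : IsSmoothHomogeneous k f) (v : E) (n : ℕ) :
    IsSmoothHomogeneous (k - n) ((dirDeriv v)^[n] f) := by
  induction n with
  | zero => simpa using hf
  | succ n ih =>
    rw [iterate_succ_apply', Nat.cast_succ, ← sub_sub]
    exact ih.dirDeriv v

lemma exists_norm_le_of_degree_zero [ProperSpace E] (hf : IsSmoothHomogeneous 0 f) :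
    ∃ M, ∀ x ≠ 0, ‖f x‖ ≤ M := by
  have hsphere : Metric.sphere (0 : E) 1 ⊆ {0}ᶜ := fun x hx =>
    ne_zero_of_mem_unit_sphere ⟨x, hx⟩
  obtain ⟨M, hM⟩ := (isCompact_sphere (0 : E) 1).exists_bound_of_continuousOn
    (hf.contDiffOn.continuousOn.mono hsphere)
  refine ⟨M, fun x hx => ?_⟩
  have hnormalize : f (‖x‖⁻¹ • x) = f x := by
    simpa using hf.map_smul ‖x‖⁻¹ (by positivity) x hx
  rw [← hnormalize]
  exact hM _ (by simp [norm_smul, hx])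

theorem exists_dirDeriv_iterate_log_smul_eq (hρ : IsSmoothHomogeneous m ρ)
    (hρ₀ : ∀ x ≠ 0, ρ x ≠ 0) (hA : IsSmoothHomogeneous k A) (v : E) (n : ℕ) :
    ∃ B : E → F, IsSmoothHomogeneous (k - n) B ∧
      EqOn ((dirDeriv v)^[n] fun x => Real.log (ρ x) • A x)
        (fun x => Real.log (ρ x) • (dirDeriv v)^[n] A x + B x) {0}ᶜ := by
  induction n with
  | zero => exact ⟨0, ⟨contDiffOn_const, by simp⟩, fun x _ => by simp⟩
  | succ n ih =>
    obtain ⟨B, hB, hexpansion⟩ := ih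
    have hAn := hA.dirDeriv_iterate v n
    have hlog : IsSmoothHomogeneous (-1) fun x => (ρ x)⁻¹ * dirDeriv v ρ x := by
      have hdegree : -m + (m - 1) = -1 := by ring
      exact hdegree ▸ (hρ.inv hρ₀).smul (hρ.dirDeriv v)
    refine ⟨fun x => ((ρ x)⁻¹ * dirDeriv v ρ x) • (dirDeriv v)^[n] A x +
      dirDeriv v B x, ?_, fun x hx => ?_⟩
    · rw [Nat.cast_succ, ← sub_sub]
      exact (neg_add_eq_sub 1 (k - n : ℤ) ▸ hlog.smul hAn).add (hB.dirDeriv v)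
    · simp only [iterate_succ_apply']
      rw [dirDeriv_eqOn isOpen_compl_singleton hexpansion v hx]
      exact dirDeriv_log_smul_add (hρ.differentiableAt hx) (hρ₀ x hx) (hAn.differentiableAt hx)
        (hB.differentiableAt hx) v

theorem exists_bounded_dirDeriv_iterate_log_smul_eq [ProperSpace E] {n : ℕ}
    (hρ : IsSmoothHomogeneous m ρ) (hρ₀ : ∀ x ≠ 0, ρ x ≠ 0) (hA : IsSmoothHomogeneous n A)
    (v : E) :
    ∃ B : E → F, (∃ M, ∀ x ≠ 0, ‖B x‖ ≤ M) ∧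
      EqOn ((dirDeriv v)^[n] fun x => Real.log (ρ x) • A x)
        (fun x => Real.log (ρ x) • (dirDeriv v)^[n] A x + B x) {0}ᶜ := by
  obtain ⟨B, hB, hexpansion⟩ := exists_dirDeriv_iterate_log_smul_eq hρ hρ₀ hA v n
  rw [sub_self] at hB
  exact ⟨B, hB.exists_norm_le_of_degree_zero, hexpansion⟩

end IsSmoothHomogeneous

end Homogeneous

lemma uncurry_pdx (f : ℝ → ℝ → ℝ) : uncurry (pdx f) = dirDeriv (1, 0) (uncurry f) := by
  ext ⟨x, y⟩
  simpa [dirDeriv, lineDeriv, uncurry, pdx] using (deriv_comp_const_add (f · y) x 0).symm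

lemma uncurry_pdy (f : ℝ → ℝ → ℝ) : uncurry (pdy f) = dirDeriv (0, 1) (uncurry f) := by
  ext ⟨x, y⟩
  simpa [dirDeriv, lineDeriv, uncurry, pdy] using (deriv_comp_const_add (f x) y 0).symm

lemma uncurry_iterate_pdx (f : ℝ → ℝ → ℝ) (n : ℕ) :
    uncurry (pdx^[n] f) = (dirDeriv (1, 0))^[n] (uncurry f) :=
  Semiconj.iterate_right uncurry_pdx n f

lemma uncurry_iterate_pdy (f : ℝ → ℝ → ℝ) (n : ℕ) :
    uncurry (pdy^[n] f) = (dirDeriv (0, 1))^[n] (uncurry f) :=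
  Semiconj.iterate_right uncurry_pdy n f

lemma pdx_pdx_pdx_pdx_Q (x y : ℝ) : pdx (pdx (pdx (pdx Q))) x y = 24 := by
  calc pdx (pdx (pdx (pdx Q))) x y = 4 * (3 * 2) := by
        simp (disch := fun_prop) [pdx, Q, deriv_fun_add, deriv_fun_sub]
    _ = 24 := by norm_num

lemma pdy_pdy_pdy_pdy_Q (x y : ℝ) : pdy (pdy (pdy (pdy Q))) x y = 24 := by
  calc pdy (pdy (pdy (pdy Q))) x y = 4 * (3 * 2) := by
        simp (disch := fun_prop) [pdy, Q, deriv_fun_add, deriv_fun_sub]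
    _ = 24 := by norm_num

lemma sq_add_sq_pos_iff_mk_ne_zero {x y : ℝ} : 0 < x ^ 2 + y ^ 2 ↔ (x, y) ≠ 0 := by
  have hnonneg : 0 ≤ x ^ 2 + y ^ 2 := by positivity
  rw [hnonneg.lt_iff_ne', ne_eq, add_eq_zero_iff_of_nonneg (sq_nonneg x) (sq_nonneg y),
    sq_eq_zero_iff, sq_eq_zero_iff, ne_eq, Prod.mk_eq_zero]

lemma isSmoothHomogeneous_sq_add_sq :
    IsSmoothHomogeneous 2 (fun p : ℝ × ℝ => p.1 ^ 2 + p.2 ^ 2) where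
  contDiffOn := by fun_prop
  map_smul c _ p _ := by
    simp only [Prod.smul_fst, Prod.smul_snd, smul_eq_mul, zpow_ofNat]
    ring

lemma isSmoothHomogeneous_Q : IsSmoothHomogeneous (4 : ℕ) (uncurry Q) where
  contDiffOn := by
    unfold uncurry Q
    fun_prop
  map_smul c _ p _ := by
    simp only [uncurry, Q, Prod.smul_fst, Prod.smul_snd, smul_eq_mul, zpow_natCast]
    ring

lemma exists_bounded_dirDeriv_iterate_four_G_eq (v : ℝ × ℝ) :
    ∃ H : ℝ → ℝ → ℝ, (∃ M : ℝ, ∀ x y : ℝ, 0 < x ^ 2 + y ^ 2 → |H x y| ≤ M) ∧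
      ∀ x y : ℝ, 0 < x ^ 2 + y ^ 2 → (dirDeriv v)^[4] (uncurry G) (x, y) =
        (dirDeriv v)^[4] (uncurry Q) (x, y) * Real.log (x ^ 2 + y ^ 2) + H x y := by
  obtain ⟨B, ⟨M, hM⟩, hB⟩ :=
    isSmoothHomogeneous_sq_add_sq.exists_bounded_dirDeriv_iterate_log_smul_eq
      (fun p hp => (sq_add_sq_pos_iff_mk_ne_zero.2 hp).ne') isSmoothHomogeneous_Q v
  have hG : uncurry G = fun p => Real.log (p.1 ^ 2 + p.2 ^ 2) • uncurry Q p := by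
    ext p
    exact mul_comm _ _
  refine ⟨curry B, ⟨M, fun x y hr => hM (x, y) (sq_add_sq_pos_iff_mk_ne_zero.1 hr)⟩,
    fun x y hr => ?_⟩
  rw [hG, hB (sq_add_sq_pos_iff_mk_ne_zero.1 hr), mul_comm]
  rfl

theorem pure_fourth_derivatives_G_log_singularity_general :
    ∃ H₁ H₂ : ℝ → ℝ → ℝ,
      (∃ M : ℝ, ∀ x y : ℝ, 0 < x ^ 2 + y ^ 2 → |H₁ x y| ≤ M) ∧
      (∃ M : ℝ, ∀ x y : ℝ, 0 < x ^ 2 + y ^ 2 → |H₂ x y| ≤ M) ∧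
      (∀ x y : ℝ, 0 < x ^ 2 + y ^ 2 →
        pdx (pdx (pdx (pdx G))) x y = 24 * Real.log (x ^ 2 + y ^ 2) + H₁ x y) ∧
      (∀ x y : ℝ, 0 < x ^ 2 + y ^ 2 →
        pdy (pdy (pdy (pdy G))) x y = 24 * Real.log (x ^ 2 + y ^ 2) + H₂ x y) := by
  obtain ⟨H₁, hbdd₁, hH₁⟩ := exists_bounded_dirDeriv_iterate_four_G_eq (1, 0)
  obtain ⟨H₂, hbdd₂, hH₂⟩ := exists_bounded_dirDeriv_iterate_four_G_eq (0, 1)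
  simp only [← uncurry_iterate_pdx] at hH₁
  simp only [← uncurry_iterate_pdy] at hH₂
  refine ⟨H₁, H₂, hbdd₁, hbdd₂, fun x y hr => ?_, fun x y hr => ?_⟩
  · rw [← pdx_pdx_pdx_pdx_Q x y]
    exact hH₁ x y hr
  · rw [← pdy_pdy_pdy_pdy_Q x y]
    exact hH₂ x y hr

/-- On the punctured unit ball, `∂⁴G/∂x⁴ = 24 log(x² + y²) + H₁` and
`∂⁴G/∂y⁴ = 24 log(x² + y²) + H₂` with `H₁, H₂` bounded there. -/
theorem pure_fourth_derivatives_G_log_singularity :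
    ∃ H₁ H₂ : ℝ → ℝ → ℝ,
      (∃ M : ℝ, ∀ x y : ℝ, 0 < x ^ 2 + y ^ 2 → x ^ 2 + y ^ 2 < 1 → |H₁ x y| ≤ M) ∧
      (∃ M : ℝ, ∀ x y : ℝ, 0 < x ^ 2 + y ^ 2 → x ^ 2 + y ^ 2 < 1 → |H₂ x y| ≤ M) ∧
      (∀ x y : ℝ, 0 < x ^ 2 + y ^ 2 → x ^ 2 + y ^ 2 < 1 →
        pdx (pdx (pdx (pdx G))) x y = 24 * Real.log (x ^ 2 + y ^ 2) + H₁ x y) ∧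
      (∀ x y : ℝ, 0 < x ^ 2 + y ^ 2 → x ^ 2 + y ^ 2 < 1 →
        pdy (pdy (pdy (pdy G))) x y = 24 * Real.log (x ^ 2 + y ^ 2) + H₂ x y) := by
  obtain ⟨H₁, H₂, ⟨M₁, hM₁⟩, ⟨M₂, hM₂⟩, hx, hy⟩ := pure_fourth_derivatives_G_log_singularity_general
  exact ⟨H₁, H₂, ⟨M₁, fun x y hr _ => hM₁ x y hr⟩, ⟨M₂, fun x y hr _ => hM₂ x y hr⟩,
    fun x y hr _ => hx x y hr, fun x y hr _ => hy x y hr⟩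
end

section
/- Let Q(x,y) = x⁴ + y⁴ − 6x²y² and G(x,y) = Q(x,y) · log(x² + y²), defined for (x,y) ∈ ℝ² \ {(0,0)}. Then there exists r ∈ (0,1) such that |∂⁴G/∂x²∂y²(x,y)| ≥ 12 |log(x² + y²)| for all (x,y) with 0 < x² + y² < r². In particular ∂⁴G/∂x²∂y² is unbounded on every punctured neighborhood of the origin. -/
/-!
Differentiation keeps the shape `A log s + B / sᵏ`, where `s = x² + y²` and `A`, `B` are
polynomials, so `∂ₓ²∂_y² G` is found by tracking `A` and `B` through four steps:
`∂ₓ²∂_y² G = -24 log s - 68 + 768 x⁴y⁴ / s⁴ ≥ -24 log s - 68`. The logarithm dominates the constant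
as soon as `-12 log s ≥ 68`, in particular when `s < e⁻⁶`, so `r = e⁻³` works.
-/

open Real
open scoped Topology

section PartialDerivatives

variable {U : Set (ℝ × ℝ)} {f g : ℝ → ℝ → ℝ} {x y : ℝ}

lemma pdx_congr_of_isOpen (hU : IsOpen U) (hfg : ∀ a b, (a, b) ∈ U → f a b = g a b)
    (hxy : (x, y) ∈ U) : pdx f x y = pdx g x y := by
  have hnhds : ∀ᶠ t in 𝓝 x, (t, y) ∈ U :=
    (hU.preimage (by fun_prop : Continuous fun t : ℝ => (t, y))).mem_nhds hxy
  exact Filter.EventuallyEq.deriv_eq (hnhds.mono fun t ht => hfg t y ht)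

lemma pdy_congr_of_isOpen (hU : IsOpen U) (hfg : ∀ a b, (a, b) ∈ U → f a b = g a b)
    (hxy : (x, y) ∈ U) : pdy f x y = pdy g x y := by
  have hnhds : ∀ᶠ t in 𝓝 y, (x, t) ∈ U :=
    (hU.preimage (by fun_prop : Continuous fun t : ℝ => (x, t))).mem_nhds hxy
  exact Filter.EventuallyEq.deriv_eq (hnhds.mono fun t ht => hfg x t ht)

end PartialDerivatives

lemma deriv_mul_log_add_div_pow {A B S : ℝ → ℝ} {t : ℝ} (hA : DifferentiableAt ℝ A t)
    (hB : DifferentiableAt ℝ B t) (hS : DifferentiableAt ℝ S t) (hSt : S t ≠ 0) (k : ℕ) :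
    deriv (fun u => A u * log (S u) + B u / S u ^ k) t =
      deriv A t * log (S t) +
        (S t * deriv B t - k * deriv S t * B t + deriv S t * S t ^ k * A t) / S t ^ (k + 1) := by
  have hlog := hA.hasDerivAt.mul (hS.hasDerivAt.log hSt)
  have hdiv := hB.hasDerivAt.div (hS.hasDerivAt.pow k) (pow_ne_zero k hSt)
  refine ((hlog.add hdiv).congr_deriv ?_).deriv
  -- The power rule produces `S t ^ (k - 1)`, with truncated subtraction.
  rcases k with _ | k
  · simp only [pow_zero, Pi.one_apply, Nat.cast_zero, zero_tsub, zero_mul, mul_zero]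
    field_simp
    ring
  · simp only [Nat.add_sub_cancel, Pi.pow_apply]
    field_simp
    ring

section OffOrigin

variable {A B : ℝ → ℝ → ℝ} {x y : ℝ}

lemma isOpen_setOf_sq_add_sq_pos : IsOpen {p : ℝ × ℝ | 0 < p.1 ^ 2 + p.2 ^ 2} :=
  isOpen_lt (by fun_prop) (by fun_prop)

lemma pdx_mul_log_add_div_pow (hA : DifferentiableAt ℝ (fun t => A t y) x)
    (hB : DifferentiableAt ℝ (fun t => B t y) x) (hs : 0 < x ^ 2 + y ^ 2) (k : ℕ) :
    pdx (fun a b => A a b * log (a ^ 2 + b ^ 2) + B a b / (a ^ 2 + b ^ 2) ^ k) x y =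
      pdx A x y * log (x ^ 2 + y ^ 2) +
        ((x ^ 2 + y ^ 2) * pdx B x y - k * (2 * x) * B x y +
          2 * x * (x ^ 2 + y ^ 2) ^ k * A x y) / (x ^ 2 + y ^ 2) ^ (k + 1) := by
  have hds : deriv (fun t => t ^ 2 + y ^ 2) x = 2 * x := by simp
  simpa only [pdx, hds] using
    deriv_mul_log_add_div_pow hA hB (S := fun t => t ^ 2 + y ^ 2) (by fun_prop) hs.ne' k

lemma pdy_mul_log_add_div_pow (hA : DifferentiableAt ℝ (A x) y)
    (hB : DifferentiableAt ℝ (B x) y) (hs : 0 < x ^ 2 + y ^ 2) (k : ℕ) :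
    pdy (fun a b => A a b * log (a ^ 2 + b ^ 2) + B a b / (a ^ 2 + b ^ 2) ^ k) x y =
      pdy A x y * log (x ^ 2 + y ^ 2) +
        ((x ^ 2 + y ^ 2) * pdy B x y - k * (2 * y) * B x y +
          2 * y * (x ^ 2 + y ^ 2) ^ k * A x y) / (x ^ 2 + y ^ 2) ^ (k + 1) := by
  have hds : deriv (fun t => x ^ 2 + t ^ 2) y = 2 * y := by simp
  simpa only [pdy, hds] using
    deriv_mul_log_add_div_pow hA hB (S := fun t => x ^ 2 + t ^ 2) (by fun_prop) hs.ne' k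

lemma pdy_Q : pdy Q x y = 4 * y ^ 3 - 12 * x ^ 2 * y := by
  simp (disch := fun_prop) only [pdy, Q, deriv_fun_add, deriv_fun_sub, deriv_fun_mul,
    deriv_fun_pow, deriv_const', deriv_id'', Nat.cast_ofNat, Nat.add_one_sub_one]
  ring

lemma pdy_G (hs : 0 < x ^ 2 + y ^ 2) :
    pdy G x y = (4 * y ^ 3 - 12 * x ^ 2 * y) * log (x ^ 2 + y ^ 2) +
      2 * y * Q x y / (x ^ 2 + y ^ 2) := by
  have hQ : DifferentiableAt ℝ (Q x) y := by unfold Q; fun_prop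
  have hG : G = fun a b => Q a b * log (a ^ 2 + b ^ 2) + 0 / (a ^ 2 + b ^ 2) ^ 0 := by
    simp [funext_iff, G]
  rw [hG, pdy_mul_log_add_div_pow hQ (by fun_prop) hs, pdy_Q]
  simp [pdy]

lemma pdy_pdy_G (hs : 0 < x ^ 2 + y ^ 2) :
    pdy (pdy G) x y = 12 * (y ^ 2 - x ^ 2) * log (x ^ 2 + y ^ 2) +
      2 * (x ^ 6 - 31 * x ^ 4 * y ^ 2 - 9 * x ^ 2 * y ^ 4 + 7 * y ^ 6) / (x ^ 2 + y ^ 2) ^ 2 := by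
  have hpdy_G (a b : ℝ) (hab : 0 < a ^ 2 + b ^ 2) :
      pdy G a b = (4 * b ^ 3 - 12 * a ^ 2 * b) * log (a ^ 2 + b ^ 2) +
        2 * b * Q a b / (a ^ 2 + b ^ 2) ^ 1 := by
    rw [pdy_G hab, pow_one]
  have hA : pdy (fun a b => 4 * b ^ 3 - 12 * a ^ 2 * b) x y = 12 * (y ^ 2 - x ^ 2) := by
    simp (disch := fun_prop) only [pdy, deriv_fun_sub, deriv_const_mul_id', deriv_fun_mul,
      deriv_fun_pow, deriv_const', deriv_id'', Nat.cast_ofNat, Nat.add_one_sub_one]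
    ring
  have hB : pdy (fun a b => 2 * b * Q a b) x y = 2 * (x ^ 4 - 18 * x ^ 2 * y ^ 2 + 5 * y ^ 4) := by
    simp (disch := fun_prop) only [pdy, Q, deriv_fun_add, deriv_fun_sub, deriv_const_mul_id',
      deriv_fun_mul, deriv_fun_pow, deriv_const', deriv_id'', Nat.cast_ofNat, Nat.add_one_sub_one]
    ring
  rw [pdy_congr_of_isOpen isOpen_setOf_sq_add_sq_pos hpdy_G hs,
    pdy_mul_log_add_div_pow (by fun_prop) (by unfold Q; fun_prop) hs, hA, hB, Q]
  push_cast
  ring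

lemma pdx_pdy_pdy_G (hs : 0 < x ^ 2 + y ^ 2) :
    pdx (pdy (pdy G)) x y = -24 * x * log (x ^ 2 + y ^ 2) +
      -4 * x * (5 * x ^ 6 + 3 * x ^ 4 * y ^ 2 + 47 * x ^ 2 * y ^ 4 + 17 * y ^ 6) /
        (x ^ 2 + y ^ 2) ^ 3 := by
  have hA : pdx (fun a b => 12 * (b ^ 2 - a ^ 2)) x y = -24 * x := by
    simp (disch := fun_prop) only [pdx, deriv_fun_sub, deriv_fun_mul, deriv_fun_pow, deriv_const',
      deriv_id'', Nat.cast_ofNat, Nat.add_one_sub_one]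
    ring
  have hB : pdx (fun a b => 2 * (a ^ 6 - 31 * a ^ 4 * b ^ 2 - 9 * a ^ 2 * b ^ 4 + 7 * b ^ 6)) x y =
      4 * x * (3 * x ^ 4 - 62 * x ^ 2 * y ^ 2 - 9 * y ^ 4) := by
    simp (disch := fun_prop) only [pdx, deriv_fun_add, deriv_fun_sub, deriv_fun_mul, deriv_fun_pow,
      deriv_const', deriv_id'', Nat.cast_ofNat, Nat.add_one_sub_one]
    ring
  rw [pdx_congr_of_isOpen isOpen_setOf_sq_add_sq_pos (fun _ _ => pdy_pdy_G) hs,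
    pdx_mul_log_add_div_pow (by fun_prop) (by fun_prop) hs, hA, hB]
  push_cast
  ring

lemma pdx_pdx_pdy_pdy_G (hs : 0 < x ^ 2 + y ^ 2) :
    pdx (pdx (pdy (pdy G))) x y =
      -24 * log (x ^ 2 + y ^ 2) - 68 + 768 * x ^ 4 * y ^ 4 / (x ^ 2 + y ^ 2) ^ 4 := by
  have hA : pdx (fun a _ => -24 * a) x y = -24 := by
    simp [pdx]
  have hB : pdx (fun a b => -4 * a *
        (5 * a ^ 6 + 3 * a ^ 4 * b ^ 2 + 47 * a ^ 2 * b ^ 4 + 17 * b ^ 6)) x y =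
      -4 * (35 * x ^ 6 + 15 * x ^ 4 * y ^ 2 + 141 * x ^ 2 * y ^ 4 + 17 * y ^ 6) := by
    simp (disch := fun_prop) only [pdx, deriv_fun_add, deriv_const_mul_id', deriv_fun_mul,
      deriv_fun_pow, deriv_const', deriv_id'', Nat.cast_ofNat, Nat.add_one_sub_one]
    ring
  rw [pdx_congr_of_isOpen isOpen_setOf_sq_add_sq_pos (fun _ _ => pdx_pdy_pdy_G) hs,
    pdx_mul_log_add_div_pow (by fun_prop) (by fun_prop) hs, hA, hB]
  push_cast
  field_simp
  ring

lemma neg_mul_log_sub_le_pdx_pdx_pdy_pdy_G (hs : 0 < x ^ 2 + y ^ 2) :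
    -24 * log (x ^ 2 + y ^ 2) - 68 ≤ pdx (pdx (pdy (pdy G))) x y := by
  rw [pdx_pdx_pdy_pdy_G hs]
  exact le_add_of_nonneg_right (by positivity)

end OffOrigin

/-- Near the origin, `|∂ₓ∂ₓ∂_y∂_y G(x,y)| ≥ 12 |log(x² + y²)|`; in particular this
fourth derivative is unbounded on every punctured neighborhood of the origin. -/
theorem mixed_fourth_derivative_G_lower_bound :
    ∃ r : ℝ, 0 < r ∧ r < 1 ∧
      ∀ x y : ℝ, 0 < x ^ 2 + y ^ 2 → x ^ 2 + y ^ 2 < r ^ 2 →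
        12 * |Real.log (x ^ 2 + y ^ 2)| ≤ |pdx (pdx (pdy (pdy G))) x y| := by
  refine ⟨exp (-3), exp_pos _, by simp, fun x y hs hr => ?_⟩
  have hexp : exp (-3) ^ 2 = exp (-6) := by
    rw [← exp_nat_mul]
    norm_num
  have hlog : log (x ^ 2 + y ^ 2) < -6 := (log_lt_iff_lt_exp hs).2 (hexp ▸ hr)
  calc 12 * |log (x ^ 2 + y ^ 2)| = -12 * log (x ^ 2 + y ^ 2) := by
        rw [abs_of_neg (by linarith)]
        ring
    _ ≤ -24 * log (x ^ 2 + y ^ 2) - 68 := by linarith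
    _ ≤ pdx (pdx (pdy (pdy G))) x y := neg_mul_log_sub_le_pdx_pdx_pdy_pdy_G hs
    _ ≤ |pdx (pdx (pdy (pdy G))) x y| := le_abs_self _
end

section
/- Let Q(x,y) = x⁴ + y⁴ − 6x²y² and G(x,y) = Q(x,y) · log(x² + y²), defined for (x,y) ∈ ℝ² \ {(0,0)}, and for δ, η > 0 let u = δ ∇⊥(ΔG) + η (y, 0) on B₁ \ {0}, where ∇⊥f = (∂_y f, −∂_x f). Then there exist δ₀ > 0 and η₀ > 0 such that for all 0 < δ ≤ δ₀ and 0 < η ≤ η₀, the Jacobian matrix satisfies sup_{0 < x² + y² < 1} ‖∇u(x,y)‖ ≤ 1, where ‖·‖ is the operator norm of a 2×2 real matrix. -/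
/-- The Laplacian `Δf = ∂²f/∂x² + ∂²f/∂y²`. -/
noncomputable def lap (f : ℝ → ℝ → ℝ) (x y : ℝ) : ℝ :=
  pdx (pdx f) x y + pdy (pdy f) x y

/-- First component of `u = δ ∇⊥(ΔG) + η (y, 0)`, where `∇⊥ f = (∂_y f, −∂_x f)`. -/
noncomputable def u₁ (δ η : ℝ) (x y : ℝ) : ℝ := δ * pdy (lap G) x y + η * y

/-- Second component of `u = δ ∇⊥(ΔG) + η (y, 0)`. -/
noncomputable def u₂ (δ : ℝ) (x y : ℝ) : ℝ := -(δ * pdx (lap G) x y)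

/-- The Jacobian matrix `∇u = (∂ⱼ uᵢ)` of `u = δ ∇⊥(ΔG) + η (y, 0)`. -/
noncomputable def gradU (δ η : ℝ) (x y : ℝ) : Matrix (Fin 2) (Fin 2) ℝ :=
  !![pdx (u₁ δ η) x y, pdy (u₁ δ η) x y;
     pdx (u₂ δ) x y,   pdy (u₂ δ) x y]

open Topology

open scoped Matrix.Norms.Frobenius in
lemma norm_toEuclideanCLM_le_sqrt {𝕜 n : Type*} [RCLike 𝕜] [Fintype n] [DecidableEq n]
    (A : Matrix n n 𝕜) :
    ‖Matrix.toEuclideanCLM (𝕜 := 𝕜) A‖ ≤ √(∑ i, ∑ j, ‖A i j‖ ^ 2) := by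
  refine ContinuousLinearMap.opNorm_le_bound _ (Real.sqrt_nonneg _) fun v => ?_
  have h := Matrix.frobenius_norm_mul A (Matrix.replicateCol Unit v.ofLp)
  rw [← Matrix.replicateCol_mulVec, Matrix.frobenius_norm_replicateCol,
    Matrix.frobenius_norm_replicateCol, ← Matrix.toEuclideanCLM_toLp] at h
  simpa [Matrix.frobenius_norm_def, Real.sqrt_eq_rpow] using h

section PartialDerivatives

variable {f g : ℝ → ℝ → ℝ} {x y : ℝ}

lemma pdy_eq_pdx_of_symm (hf : ∀ a b, f a b = f b a) (x y : ℝ) : pdy f x y = pdx f y x :=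
  congrArg (deriv · y) (funext fun t => hf x t)

lemma lap_eq_of_symm (hf : ∀ a b, f a b = f b a) (x y : ℝ) :
    lap f x y = pdx (pdx f) x y + pdx (pdx f) y x := by
  have pdy_eq : pdy f = fun a b => pdx f b a := funext₂ (pdy_eq_pdx_of_symm hf)
  rw [lap, pdy_eq]
  rfl

lemma lap_symm (hf : ∀ a b, f a b = f b a) (x y : ℝ) : lap f x y = lap f y x := by
  rw [lap_eq_of_symm hf, lap_eq_of_symm hf, add_comm]

lemma lap_eq_iteratedDeriv (f : ℝ → ℝ → ℝ) (x y : ℝ) :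
    lap f x y = iteratedDeriv 2 (fun t => f t y) x + iteratedDeriv 2 (f x) y := by
  rw [iteratedDeriv_succ, iteratedDeriv_one, iteratedDeriv_succ, iteratedDeriv_one]
  rfl

lemma lap_mul (hfx : ContDiffAt ℝ 2 (fun t => f t y) x) (hfy : ContDiffAt ℝ 2 (f x) y)
    (hgx : ContDiffAt ℝ 2 (fun t => g t y) x) (hgy : ContDiffAt ℝ 2 (g x) y) :
    lap (fun a b => f a b * g a b) x y =
      lap f x y * g x y + 2 * (pdx f x y * pdx g x y + pdy f x y * pdy g x y)
        + f x y * lap g x y := by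
  rw [lap_eq_iteratedDeriv, iteratedDeriv_fun_mul hfx hgx, iteratedDeriv_fun_mul hfy hgy]
  simp only [Finset.sum_range_succ, Finset.range_zero, Finset.sum_empty, Nat.choose_zero_right,
    Nat.choose_succ_self_right, Nat.choose_self, iteratedDeriv_zero, iteratedDeriv_one,
    Nat.add_one_sub_one, tsub_zero, tsub_self, lap_eq_iteratedDeriv, pdx, pdy]
  push_cast
  ring

end PartialDerivatives

section LogNormSq

variable {x y : ℝ}

lemma eventually_sq_add_sq_ne_zero (hs : x ^ 2 + y ^ 2 ≠ 0) :
    ∀ᶠ t in 𝓝 x, t ^ 2 + y ^ 2 ≠ 0 :=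
  ContinuousAt.eventually_ne (by fun_prop) hs

lemma hasDerivAt_sq_add_sq (x y : ℝ) : HasDerivAt (fun t => t ^ 2 + y ^ 2) (2 * x) x := by
  simpa using (hasDerivAt_pow 2 x).add_const (y ^ 2)

lemma pdx_log_sq_add_sq (hs : x ^ 2 + y ^ 2 ≠ 0) :
    pdx (fun a b => Real.log (a ^ 2 + b ^ 2)) x y = 2 * x / (x ^ 2 + y ^ 2) :=
  ((hasDerivAt_sq_add_sq x y).log hs).deriv

lemma pdx_pdx_log_sq_add_sq (hs : x ^ 2 + y ^ 2 ≠ 0) :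
    pdx (pdx fun a b => Real.log (a ^ 2 + b ^ 2)) x y =
      2 * (y ^ 2 - x ^ 2) / (x ^ 2 + y ^ 2) ^ 2 := by
  have hpdx : (pdx (fun a b => Real.log (a ^ 2 + b ^ 2)) · y) =ᶠ[𝓝 x]
      fun t => 2 * t / (t ^ 2 + y ^ 2) :=
    (eventually_sq_add_sq_ne_zero hs).mono fun _ => pdx_log_sq_add_sq
  refine (hpdx.deriv_eq.trans
    (((hasDerivAt_id x).const_mul 2).div (hasDerivAt_sq_add_sq x y) hs).deriv).trans ?_
  simp only [id]
  ring

lemma lap_log_sq_add_sq (hs : x ^ 2 + y ^ 2 ≠ 0) :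
    lap (fun a b => Real.log (a ^ 2 + b ^ 2)) x y = 0 := by
  rw [lap_eq_of_symm (fun a b => by rw [add_comm]), pdx_pdx_log_sq_add_sq hs,
    pdx_pdx_log_sq_add_sq (by rwa [add_comm])]
  ring

lemma lap_mul_log_sq_add_sq {f : ℝ → ℝ → ℝ} {k : ℝ} (hs : x ^ 2 + y ^ 2 ≠ 0)
    (hfx : ContDiffAt ℝ 2 (fun t => f t y) x) (hfy : ContDiffAt ℝ 2 (f x) y)
    (harmonic : lap f x y = 0) (euler : x * pdx f x y + y * pdy f x y = k * f x y) :
    lap (fun a b => f a b * Real.log (a ^ 2 + b ^ 2)) x y =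
      4 * k * f x y / (x ^ 2 + y ^ 2) := by
  have pdy_log : pdy (fun a b => Real.log (a ^ 2 + b ^ 2)) x y = 2 * y / (x ^ 2 + y ^ 2) := by
    rw [pdy_eq_pdx_of_symm (fun a b => by rw [add_comm]), pdx_log_sq_add_sq (by rwa [add_comm]),
      add_comm]
  rw [lap_mul hfx hfy (by fun_prop (disch := assumption)) (by fun_prop (disch := assumption)),
    harmonic, lap_log_sq_add_sq hs, pdx_log_sq_add_sq hs, pdy_log]
  linear_combination 4 / (x ^ 2 + y ^ 2) * euler

end LogNormSq

section LaplacianOfG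

variable {x y : ℝ}

lemma Q_symm (x y : ℝ) : Q x y = Q y x := by
  simp only [Q]
  ring

lemma G_symm (x y : ℝ) : G x y = G y x := by
  rw [G, G, Q_symm, add_comm]

lemma hasDerivAt_Q (x y : ℝ) : HasDerivAt (Q · y) (4 * x ^ 3 - 12 * x * y ^ 2) x := by
  refine (((hasDerivAt_pow 4 x).add_const (y ^ 4)).sub
    (((hasDerivAt_pow 2 x).const_mul 6).mul_const (y ^ 2))).congr_deriv ?_
  push_cast
  ring

lemma pdx_Q : pdx Q = fun x y => 4 * x ^ 3 - 12 * x * y ^ 2 :=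
  funext₂ fun x y => (hasDerivAt_Q x y).deriv

lemma pdx_pdx_Q (x y : ℝ) : pdx (pdx Q) x y = 12 * x ^ 2 - 12 * y ^ 2 := by
  rw [pdx_Q]
  refine (((hasDerivAt_pow 3 x).const_mul 4).sub
    (((hasDerivAt_id x).const_mul 12).mul_const (y ^ 2))).deriv.trans ?_
  push_cast
  ring

lemma lap_Q (x y : ℝ) : lap Q x y = 0 := by
  rw [lap_eq_of_symm Q_symm, pdx_pdx_Q, pdx_pdx_Q]
  ring

lemma euler_Q (x y : ℝ) : x * pdx Q x y + y * pdy Q x y = 4 * Q x y := by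
  rw [pdy_eq_pdx_of_symm Q_symm, pdx_Q, Q]
  ring

lemma lap_G (hs : x ^ 2 + y ^ 2 ≠ 0) : lap G x y = 16 * Q x y / (x ^ 2 + y ^ 2) := by
  have contDiff_left : ContDiffAt ℝ 2 (Q · y) x := by unfold Q; fun_prop
  have contDiff_right : ContDiffAt ℝ 2 (Q x) y := by unfold Q; fun_prop
  exact (lap_mul_log_sq_add_sq hs contDiff_left contDiff_right (lap_Q x y) (euler_Q x y)).trans
    (by norm_num)

lemma pdx_lap_G (hs : x ^ 2 + y ^ 2 ≠ 0) :
    pdx (lap G) x y = 32 * x - 256 * x * y ^ 4 / (x ^ 2 + y ^ 2) ^ 2 := by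
  have hlap : (lap G · y) =ᶠ[𝓝 x] fun t => 16 * Q t y / (t ^ 2 + y ^ 2) :=
    (eventually_sq_add_sq_ne_zero hs).mono fun _ => lap_G
  refine (hlap.deriv_eq.trans
    (((hasDerivAt_Q x y).const_mul 16).div (hasDerivAt_sq_add_sq x y) hs).deriv).trans ?_
  rw [Q]
  field_simp
  ring

lemma hasDerivAt_pdx_lap_G_left (hs : x ^ 2 + y ^ 2 ≠ 0) :
    HasDerivAt (pdx (lap G) · y)
      (32 * (x ^ 6 + 3 * x ^ 4 * y ^ 2 + 27 * x ^ 2 * y ^ 4 - 7 * y ^ 6) / (x ^ 2 + y ^ 2) ^ 3)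
      x := by
  refine HasDerivAt.congr_of_eventuallyEq ?_
    ((eventually_sq_add_sq_ne_zero hs).mono fun _ => pdx_lap_G)
  refine (((hasDerivAt_id x).const_mul 32).sub
    ((((hasDerivAt_id x).const_mul 256).mul_const (y ^ 4)).div
      ((hasDerivAt_sq_add_sq x y).pow 2) (pow_ne_zero 2 hs))).congr_deriv ?_
  simp only [Pi.pow_apply, id, Nat.cast_ofNat]
  field_simp
  ring

lemma hasDerivAt_pdx_lap_G_right (hs : x ^ 2 + y ^ 2 ≠ 0) :
    HasDerivAt (pdx (lap G) x) (-(1024 * x ^ 3 * y ^ 3) / (x ^ 2 + y ^ 2) ^ 3) y := by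
  rw [add_comm] at hs
  have hpdx : pdx (lap G) x =ᶠ[𝓝 y]
      fun t => 32 * x - 256 * x * t ^ 4 / (t ^ 2 + x ^ 2) ^ 2 :=
    (eventually_sq_add_sq_ne_zero hs).mono fun t ht => by
      rw [add_comm] at ht
      rw [pdx_lap_G ht, add_comm (x ^ 2)]
  refine HasDerivAt.congr_of_eventuallyEq ?_ hpdx
  refine ((((hasDerivAt_pow 4 y).const_mul (256 * x)).div
    ((hasDerivAt_sq_add_sq y x).pow 2) (pow_ne_zero 2 hs)).const_sub (32 * x)).congr_deriv ?_
  rw [add_comm (x ^ 2)]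
  simp only [Pi.pow_apply, Nat.cast_ofNat]
  field_simp
  ring

lemma pdy_lap_G (x y : ℝ) : pdy (lap G) x y = pdx (lap G) y x :=
  pdy_eq_pdx_of_symm (lap_symm G_symm) x y

lemma hasDerivAt_pdy_lap_G_left (hs : x ^ 2 + y ^ 2 ≠ 0) :
    HasDerivAt (pdy (lap G) · y) (-(1024 * x ^ 3 * y ^ 3) / (x ^ 2 + y ^ 2) ^ 3) x := by
  simp only [pdy_lap_G]
  exact (hasDerivAt_pdx_lap_G_right (by rwa [add_comm])).congr_deriv (by ring)

lemma hasDerivAt_pdy_lap_G_right (hs : x ^ 2 + y ^ 2 ≠ 0) :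
    HasDerivAt (pdy (lap G) x)
      (32 * (y ^ 6 + 3 * x ^ 2 * y ^ 4 + 27 * x ^ 4 * y ^ 2 - 7 * x ^ 6) / (x ^ 2 + y ^ 2) ^ 3)
      y := by
  rw [funext (pdy_lap_G x)]
  exact (hasDerivAt_pdx_lap_G_left (by rwa [add_comm])).congr_deriv (by ring)

end LaplacianOfG

section Jacobian

variable {x y : ℝ}

/-- The Jacobian matrix of the vector field `∇⊥f = (∂_y f, −∂_x f)`. -/
noncomputable def jacobianPerpGrad (f : ℝ → ℝ → ℝ) (x y : ℝ) : Matrix (Fin 2) (Fin 2) ℝ :=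
  !![pdx (pdy f) x y, pdy (pdy f) x y; -pdx (pdx f) x y, -pdy (pdx f) x y]

lemma gradU_eq (δ η : ℝ) (hs : x ^ 2 + y ^ 2 ≠ 0) :
    gradU δ η x y = δ • jacobianPerpGrad (lap G) x y + η • !![0, 1; 0, 0] := by
  have pdx_u₁ : pdx (u₁ δ η) x y = δ * pdx (pdy (lap G)) x y := by
    simp only [pdx, u₁, deriv_add_const, deriv_const_mul_field]
  have pdy_u₁ : pdy (u₁ δ η) x y = δ * pdy (pdy (lap G)) x y + η := by
    have h : HasDerivAt (pdy (lap G) x) (pdy (pdy (lap G)) x y) y :=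
      (hasDerivAt_pdy_lap_G_right hs).differentiableAt.hasDerivAt
    exact ((h.const_mul δ).add ((hasDerivAt_id y).const_mul η)).deriv.trans (by rw [mul_one])
  have pdx_u₂ : pdx (u₂ δ) x y = -(δ * pdx (pdx (lap G)) x y) := by
    simp only [pdx, u₂, deriv.fun_neg, deriv_const_mul_field]
  have pdy_u₂ : pdy (u₂ δ) x y = -(δ * pdy (pdx (lap G)) x y) := by
    simp only [pdy, u₂, deriv.fun_neg, deriv_const_mul_field]
  rw [gradU, pdx_u₁, pdy_u₁, pdx_u₂, pdy_u₂, jacobianPerpGrad]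
  simp

lemma sum_norm_sq_jacobianPerpGrad_lap_G (hs : x ^ 2 + y ^ 2 ≠ 0) :
    ∑ i, ∑ j, ‖jacobianPerpGrad (lap G) x y i j‖ ^ 2 =
      160 ^ 2 * 2 - 1024 * 672 * (x * y * (x ^ 2 - y ^ 2) / (x ^ 2 + y ^ 2) ^ 2) ^ 2 := by
  have pdx_pdy : pdx (pdy (lap G)) x y = _ := (hasDerivAt_pdy_lap_G_left hs).deriv
  have pdy_pdy : pdy (pdy (lap G)) x y = _ := (hasDerivAt_pdy_lap_G_right hs).deriv
  have pdx_pdx : pdx (pdx (lap G)) x y = _ := (hasDerivAt_pdx_lap_G_left hs).deriv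
  have pdy_pdx : pdy (pdx (lap G)) x y = _ := (hasDerivAt_pdx_lap_G_right hs).deriv
  simp only [jacobianPerpGrad, pdx_pdx, pdy_pdx, pdx_pdy, pdy_pdy, Fin.sum_univ_two,
    Matrix.of_apply, Matrix.cons_val_zero, Matrix.cons_val_one, Real.norm_eq_abs, sq_abs]
  field_simp
  ring

lemma norm_jacobianPerpGrad_lap_G_le (hs : x ^ 2 + y ^ 2 ≠ 0) :
    ‖Matrix.toEuclideanCLM (𝕜 := ℝ) (jacobianPerpGrad (lap G) x y)‖ ≤ 160 * √2 :=
  calc ‖Matrix.toEuclideanCLM (𝕜 := ℝ) (jacobianPerpGrad (lap G) x y)‖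
      ≤ √(∑ i, ∑ j, ‖jacobianPerpGrad (lap G) x y i j‖ ^ 2) := norm_toEuclideanCLM_le_sqrt _
    _ ≤ √(160 ^ 2 * 2) := Real.sqrt_le_sqrt <| by
        rw [sum_norm_sq_jacobianPerpGrad_lap_G hs]
        exact sub_le_self _ (by positivity)
    _ = 160 * √2 := by rw [Real.sqrt_mul (by positivity), Real.sqrt_sq (by norm_num)]

lemma norm_shear_le_one : ‖Matrix.toEuclideanCLM (𝕜 := ℝ) !![0, 1; 0, 0]‖ ≤ 1 :=
  (norm_toEuclideanCLM_le_sqrt _).trans_eq (by simp)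

theorem grad_u_small_general (δ η : ℝ) (hs : x ^ 2 + y ^ 2 ≠ 0) :
    ‖Matrix.toEuclideanCLM (𝕜 := ℝ) (gradU δ η x y)‖ ≤ 160 * √2 * |δ| + |η| := by
  rw [gradU_eq δ η hs, map_add, map_smul, map_smul]
  refine (norm_add_le _ _).trans ?_
  rw [norm_smul, norm_smul, Real.norm_eq_abs, Real.norm_eq_abs, mul_comm (160 * √2)]
  exact add_le_add
    (mul_le_mul_of_nonneg_left (norm_jacobianPerpGrad_lap_G_le hs) (abs_nonneg δ))
    (mul_le_of_le_one_right (abs_nonneg η) norm_shear_le_one)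

end Jacobian

/-- For `δ, η` small enough, the operator norm of the Jacobian matrix of
`u = δ ∇⊥(ΔG) + η (y,0)` is at most `1` on the punctured unit ball. -/
theorem grad_u_small :
    ∃ δ₀ > (0 : ℝ), ∃ η₀ > (0 : ℝ),
      ∀ δ η : ℝ, 0 < δ → δ ≤ δ₀ → 0 < η → η ≤ η₀ →
        ∀ x y : ℝ, 0 < x ^ 2 + y ^ 2 → x ^ 2 + y ^ 2 < 1 →
          ‖Matrix.toEuclideanCLM (𝕜 := ℝ) (gradU δ η x y)‖ ≤ 1 := by
  refine ⟨1 / (320 * √2), by positivity, 1 / 2, by norm_num, fun δ η hδ hδ₀ hη hη₀ x y hs _ =>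
    (grad_u_small_general δ η hs.ne').trans ?_⟩
  rw [le_div_iff₀ (by positivity)] at hδ₀
  rw [abs_of_pos hδ, abs_of_pos hη]
  linarith
end
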